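/- Let ℓ > 0 and let q : ℝ → ℝ be integrable and nonnegative on [0, ℓ]. Then there exists a continuously differentiable function f : ℝ → ℝ with f(0) = f(ℓ) = 0 and ∫₀^ℓ f(t)² dt = 1 such that ∫₀^ℓ f′(t)² dt + ∫₀^ℓ q(t) f(t)² dt ≤ (π/ℓ + ∫₀^ℓ q(t) dt)² − (∫₀^ℓ q(t) dt)². (One may take f(x) = √(2/ℓ) · sin(πx/ℓ).) -/

import Mathlib

/-!
The normalised ground state `f x = √(2/ℓ) sin (πx/ℓ)` of the free Dirichlet Laplacian has kinetic
energy `(π/ℓ)²` and satisfies `f² ≤ 2/ℓ` pointwise, so its Schrödinger energy is at most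
`(π/ℓ)² + (2/ℓ) ‖q‖₁`. Since `1 ≤ π`, this is at most
`(π/ℓ)² + 2 (π/ℓ) ‖q‖₁ = (π/ℓ + ‖q‖₁)² - ‖q‖₁²`.
-/

open Real MeasureTheory intervalIntegral

theorem abs_integral_mul_le_mul_integral_abs {a b C : ℝ} {q g : ℝ → ℝ} (hab : a ≤ b)
    (hq : IntervalIntegrable q volume a b) (hg : ∀ t ∈ Set.Ioc a b, |g t| ≤ C) :
    |∫ t in a..b, q t * g t| ≤ C * ∫ t in a..b, |q t| := by
  rw [← norm_eq_abs, ← intervalIntegral.integral_const_mul]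
  refine norm_integral_le_of_norm_le hab (ae_of_all _ fun t ht ↦ ?_) (hq.abs.const_mul C)
  calc
    ‖q t * g t‖ = |g t| * |q t| := by rw [norm_eq_abs, abs_mul, mul_comm]
    _ ≤ C * |q t| := mul_le_mul_of_nonneg_right (hg t ht) (abs_nonneg _)

theorem integral_sin_pi_div_mul_sq {ℓ : ℝ} (hℓ : ℓ ≠ 0) :
    ∫ t in (0 : ℝ)..ℓ, sin (π / ℓ * t) ^ 2 = ℓ / 2 := by
  rw [integral_comp_mul_left (fun x ↦ sin x ^ 2) (div_ne_zero pi_ne_zero hℓ),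
    div_mul_cancel₀ π hℓ, integral_sin_sq]
  simp only [mul_zero, sin_zero, sin_pi, zero_mul, sub_zero, zero_add, smul_eq_mul]
  field_simp

theorem integral_cos_pi_div_mul_sq {ℓ : ℝ} (hℓ : ℓ ≠ 0) :
    ∫ t in (0 : ℝ)..ℓ, cos (π / ℓ * t) ^ 2 = ℓ / 2 := by
  rw [integral_comp_mul_left (fun x ↦ cos x ^ 2) (div_ne_zero pi_ne_zero hℓ),
    div_mul_cancel₀ π hℓ, integral_cos_sq]
  simp only [mul_zero, sin_zero, sin_pi, sub_zero, zero_add, smul_eq_mul]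
  field_simp

/-- The `L²`-normalised first Dirichlet eigenfunction of `-d²/dx²` on `[0, ℓ]`, extended to all of
`ℝ` by the same formula. -/
noncomputable def dirichletGroundState (ℓ x : ℝ) : ℝ :=
  √(2 / ℓ) * sin (π / ℓ * x)

namespace dirichletGroundState

theorem contDiff (ℓ : ℝ) {n : WithTop ℕ∞} : ContDiff ℝ n (dirichletGroundState ℓ) := by
  unfold dirichletGroundState
  fun_prop

theorem apply_zero (ℓ : ℝ) : dirichletGroundState ℓ 0 = 0 := by
  simp [dirichletGroundState]

theorem apply_length (ℓ : ℝ) : dirichletGroundState ℓ ℓ = 0 := by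
  rcases eq_or_ne ℓ 0 with rfl | hℓ
  · exact apply_zero 0
  · simp [dirichletGroundState, div_mul_cancel₀ π hℓ]

theorem deriv_apply (ℓ x : ℝ) :
    deriv (dirichletGroundState ℓ) x = √(2 / ℓ) * (cos (π / ℓ * x) * (π / ℓ)) :=
  (((hasDerivAt_id x).const_mul (π / ℓ)).sin.const_mul √(2 / ℓ)).deriv.trans
    (by simp only [id, mul_one])

variable {ℓ : ℝ}

theorem sq_apply (hℓ : 0 ≤ ℓ) (x : ℝ) :
    dirichletGroundState ℓ x ^ 2 = 2 / ℓ * sin (π / ℓ * x) ^ 2 := by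
  rw [dirichletGroundState, mul_pow, sq_sqrt (by positivity)]

theorem sq_apply_le (hℓ : 0 ≤ ℓ) (x : ℝ) : dirichletGroundState ℓ x ^ 2 ≤ 2 / ℓ := by
  rw [sq_apply hℓ]
  exact mul_le_of_le_one_right (by positivity) (sin_sq_le_one _)

theorem integral_sq (hℓ : 0 < ℓ) : ∫ t in (0 : ℝ)..ℓ, dirichletGroundState ℓ t ^ 2 = 1 := by
  simp only [sq_apply hℓ.le]
  rw [intervalIntegral.integral_const_mul, integral_sin_pi_div_mul_sq hℓ.ne']
  field_simp

theorem integral_deriv_sq (hℓ : 0 < ℓ) :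
    ∫ t in (0 : ℝ)..ℓ, deriv (dirichletGroundState ℓ) t ^ 2 = (π / ℓ) ^ 2 := by
  have sq_deriv (t : ℝ) :
      deriv (dirichletGroundState ℓ) t ^ 2 = 2 / ℓ * (π / ℓ) ^ 2 * cos (π / ℓ * t) ^ 2 := by
    rw [deriv_apply, mul_pow, sq_sqrt (by positivity)]
    ring
  simp only [sq_deriv]
  rw [intervalIntegral.integral_const_mul, integral_cos_pi_div_mul_sq hℓ.ne']
  field_simp

theorem integral_mul_sq_le (hℓ : 0 ≤ ℓ) {q : ℝ → ℝ} (hq : IntervalIntegrable q volume 0 ℓ) :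
    ∫ t in (0 : ℝ)..ℓ, q t * dirichletGroundState ℓ t ^ 2 ≤ 2 / ℓ * ∫ t in (0 : ℝ)..ℓ, |q t| :=
  (le_abs_self _).trans <| abs_integral_mul_le_mul_integral_abs hℓ hq fun t _ ↦
    (abs_of_nonneg (sq_nonneg _)).trans_le (sq_apply_le hℓ t)

end dirichletGroundState

open dirichletGroundState in
theorem exists_test_function_rayleigh_bound_general (ℓ : ℝ) (hℓ : 0 < ℓ) (q : ℝ → ℝ)
    (hq_int : IntegrableOn q (Set.Icc (0 : ℝ) ℓ)) :
    ∃ f : ℝ → ℝ, ContDiff ℝ 1 f ∧ f 0 = 0 ∧ f ℓ = 0 ∧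
      (∫ t in (0 : ℝ)..ℓ, (f t) ^ 2) = 1 ∧
      (∫ t in (0 : ℝ)..ℓ, (deriv f t) ^ 2) + (∫ t in (0 : ℝ)..ℓ, q t * (f t) ^ 2)
        ≤ (π / ℓ + ∫ t in (0 : ℝ)..ℓ, |q t|) ^ 2 - (∫ t in (0 : ℝ)..ℓ, |q t|) ^ 2 := by
  refine ⟨dirichletGroundState ℓ, contDiff ℓ, apply_zero ℓ, apply_length ℓ, integral_sq hℓ, ?_⟩
  have hq : IntervalIntegrable q volume 0 ℓ :=
    (intervalIntegrable_iff_integrableOn_Icc_of_le hℓ.le).2 hq_int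
  have integral_abs_nonneg : 0 ≤ ∫ t in (0 : ℝ)..ℓ, |q t| :=
    integral_nonneg hℓ.le fun t _ ↦ abs_nonneg (q t)
  have one_le_pi : 1 ≤ π := by linarith [pi_gt_three]
  calc
    _ ≤ (π / ℓ) ^ 2 + 2 * 1 / ℓ * ∫ t in (0 : ℝ)..ℓ, |q t| := by
      rw [integral_deriv_sq hℓ, mul_one]
      gcongr
      exact integral_mul_sq_le hℓ.le hq
    _ ≤ (π / ℓ) ^ 2 + 2 * π / ℓ * ∫ t in (0 : ℝ)..ℓ, |q t| := by gcongr
    _ = _ := by ring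

/-- On `[0, ℓ]` with an integrable nonnegative potential `q`, there is a
normalized continuously differentiable test function vanishing at both endpoints whose
Schrödinger energy is at most `(π/ℓ + ∫₀^ℓ q)² − (∫₀^ℓ q)²`. -/
theorem exists_test_function_rayleigh_bound (ℓ : ℝ) (hℓ : 0 < ℓ) (q : ℝ → ℝ)
    (hq_int : IntegrableOn q (Set.Icc (0 : ℝ) ℓ))
    (hq_nonneg : ∀ t ∈ Set.Icc (0 : ℝ) ℓ, 0 ≤ q t) :
    ∃ f : ℝ → ℝ, ContDiff ℝ 1 f ∧ f 0 = 0 ∧ f ℓ = 0 ∧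
      (∫ t in (0 : ℝ)..ℓ, (f t) ^ 2) = 1 ∧
      (∫ t in (0 : ℝ)..ℓ, (deriv f t) ^ 2) + (∫ t in (0 : ℝ)..ℓ, q t * (f t) ^ 2)
        ≤ (Real.pi / ℓ + ∫ t in (0 : ℝ)..ℓ, q t) ^ 2
          - (∫ t in (0 : ℝ)..ℓ, q t) ^ 2 := by
  have integral_abs : ∫ t in (0 : ℝ)..ℓ, |q t| = ∫ t in (0 : ℝ)..ℓ, q t :=
    integral_congr fun t ht ↦ abs_of_nonneg (hq_nonneg t (Set.uIcc_of_le hℓ.le ▸ ht))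
  simpa only [integral_abs] using exists_test_function_rayleigh_bound_general ℓ hℓ q hq_int
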